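/- Let each f_i : R^d → R be differentiable with L_i-Lipschitz gradient, f = (1/n) Σ_{i=1}^n f_i and L̄ = (1/n) Σ_{i=1}^n L_i. Let S be a proper sampling over [n] with probability vector p, v ∈ R^n satisfy the ESO condition for S, b = Σ_i p_i and K = (b/n²) Σ_{i=1}^n v_i L_i²/p_i. Fix x, x̃ ∈ R^d, step size η > 0, constants β > 0 and c⁺ ≥ 0, define the SVRG update w := Σ_{i∈S} (∇f_i(x) − ∇f_i(x̃))/(n p_i) + ∇f(x̃) and x⁺ := x − η w, and set c := c⁺(1 + ηβ + 2Kη²/b) + Kη²L̄/b and Γ := η − c⁺η/β − η²L̄ − 2c⁺η². Then E[f(x⁺) + c⁺‖x⁺ − x̃‖²] ≤ f(x) + c‖x − x̃‖² − Γ·‖∇f(x)‖², where the expectation is over the random set S. -/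

import Mathlib

open scoped BigOperators

/-!
If `g` is an unbiased estimator of `∇F(x)`, the descent lemma and Young's inequality bound
`E[F(x - η g) + c⁺‖x - η g - x̃‖²]` in terms of `‖x - x̃‖²`, `‖∇F(x)‖²` and the second moment
`E‖g‖²` only. The SVRG direction is the constant `∇F(x̃)` plus the Horvitz–Thompson estimator
`∑_{i ∈ S} y_i / p_i` of the total of `y_i = (∇f_i(x) - ∇f_i(x̃)) / n`, so it is unbiased. The ESO
condition survives entrywise multiplication by the positive semidefinite Gram matrix of
`y_i / p_i` (Schur product theorem), and summing the entries of the product gives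
`E‖g‖² ≤ ‖∇F(x)‖² + ∑ (v_i / p_i) ‖y_i‖² ≤ ‖∇F(x)‖² + (K / b) ‖x - x̃‖²`.
-/

open scoped RealInnerProductSpace

section Gradient

variable {E : Type*} [NormedAddCommGroup E] [InnerProductSpace ℝ E] [CompleteSpace E]

lemma le_quadratic_of_lipschitz_gradient {F : E → ℝ} {M : ℝ} {x : E} (hF : Differentiable ℝ F)
    (hlip : ∀ y, ‖gradient F y - gradient F x‖ ≤ M * ‖y - x‖) (h : E) :
    F (x + h) ≤ F x + ⟪gradient F x, h⟫ + M / 2 * ‖h‖ ^ 2 := by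
  have hpath (t : ℝ) :
      HasDerivAt (fun t : ℝ => F (x + t • h)) ⟪gradient F (x + t • h), h⟫ t := by
    have hline : HasDerivAt (fun t : ℝ => x + t • h) h t := by
      simpa using ((hasDerivAt_id t).smul_const h).const_add x
    simpa [Function.comp_def] using
      (hF (x + t • h)).hasGradientAt.hasFDerivAt.comp_hasDerivAt t hline
  have hmodel (t : ℝ) :
      HasDerivAt (fun t : ℝ => F x + t * ⟪gradient F x, h⟫ + t ^ 2 * (M / 2 * ‖h‖ ^ 2))
        (⟪gradient F x, h⟫ + t * M * ‖h‖ ^ 2) t := by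
    refine ((((hasDerivAt_id t).mul_const ⟪gradient F x, h⟫).const_add (F x)).add
      ((hasDerivAt_pow 2 t).mul_const (M / 2 * ‖h‖ ^ 2))).congr_deriv ?_
    push_cast
    ring
  have hslope (t : ℝ) (ht : 0 ≤ t) :
      ⟪gradient F (x + t • h), h⟫ ≤ ⟪gradient F x, h⟫ + t * M * ‖h‖ ^ 2 := by
    have hgap : ‖gradient F (x + t • h) - gradient F x‖ ≤ M * (t * ‖h‖) := by
      simpa [norm_smul, abs_of_nonneg ht] using hlip (x + t • h)
    rw [← sub_le_iff_le_add', ← inner_sub_left]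
    calc ⟪gradient F (x + t • h) - gradient F x, h⟫
        ≤ ‖gradient F (x + t • h) - gradient F x‖ * ‖h‖ := real_inner_le_norm _ _
      _ ≤ M * (t * ‖h‖) * ‖h‖ := by gcongr
      _ = t * M * ‖h‖ ^ 2 := by ring
  have hle := image_le_of_deriv_right_le_deriv_boundary (a := 0) (b := 1)
    (fun t _ => (hpath t).continuousAt.continuousWithinAt)
    (fun t _ => (hpath t).hasDerivWithinAt) (by simp)
    (fun t _ => (hmodel t).continuousAt.continuousWithinAt)
    (fun t _ => (hmodel t).hasDerivWithinAt) (fun t ht => hslope t ht.1)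
    (Set.right_mem_Icc.mpr zero_le_one)
  simpa using hle

end Gradient

section WeightedSum

variable {Ω E : Type*} [Fintype Ω] [NormedAddCommGroup E] [InnerProductSpace ℝ E]
  {w : Ω → ℝ}

lemma sum_mul_inner (w : Ω → ℝ) (g : Ω → E) (z : E) :
    ∑ ω, w ω * ⟪g ω, z⟫ = ⟪∑ ω, w ω • g ω, z⟫ := by
  simp only [sum_inner, real_inner_smul_left]

lemma sum_mul_norm_add_const_sq (hw1 : ∑ ω, w ω = 1) (g : Ω → E) (u : E) :
    ∑ ω, w ω * ‖g ω + u‖ ^ 2 =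
      ∑ ω, w ω * ‖g ω‖ ^ 2 + 2 * ⟪∑ ω, w ω • g ω, u⟫ + ‖u‖ ^ 2 := by
  calc ∑ ω, w ω * ‖g ω + u‖ ^ 2
      = ∑ ω, (w ω * ‖g ω‖ ^ 2 + 2 * (w ω * ⟪g ω, u⟫) + w ω * ‖u‖ ^ 2) :=
        Finset.sum_congr rfl fun ω _ => by rw [norm_add_sq_real]; ring
    _ = _ := by
        rw [Finset.sum_add_distrib, Finset.sum_add_distrib, ← Finset.mul_sum, ← Finset.sum_mul,
          sum_mul_inner, hw1, one_mul]

lemma sum_mul_norm_sub_smul_sub_sq (hw1 : ∑ ω, w ω = 1) (g : Ω → E) (x y : E) (η : ℝ) :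
    ∑ ω, w ω * ‖x - η • g ω - y‖ ^ 2 =
      ‖x - y‖ ^ 2 - 2 * η * ⟪∑ ω, w ω • g ω, x - y⟫ + η ^ 2 * ∑ ω, w ω * ‖g ω‖ ^ 2 := by
  calc ∑ ω, w ω * ‖x - η • g ω - y‖ ^ 2
      = ∑ ω, w ω * ‖(-η) • g ω + (x - y)‖ ^ 2 :=
        Finset.sum_congr rfl fun ω _ => by rw [neg_smul, neg_add_eq_sub, sub_right_comm]
    _ = ∑ ω, w ω * ‖(-η) • g ω‖ ^ 2 + 2 * ⟪∑ ω, w ω • (-η) • g ω, x - y⟫ + ‖x - y‖ ^ 2 :=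
        sum_mul_norm_add_const_sq hw1 _ _
    _ = _ := by
        simp only [smul_comm _ (-η), ← Finset.smul_sum, real_inner_smul_left, norm_smul, mul_pow,
          Real.norm_eq_abs, sq_abs, neg_sq, mul_left_comm _ (η ^ 2), ← Finset.mul_sum]
        ring

lemma sum_mul_comp_sub_smul_le [CompleteSpace E] (hw0 : ∀ ω, 0 ≤ w ω) (hw1 : ∑ ω, w ω = 1)
    {F : E → ℝ} {M : ℝ} {x : E} (hF : Differentiable ℝ F)
    (hlip : ∀ y, ‖gradient F y - gradient F x‖ ≤ M * ‖y - x‖) (g : Ω → E) (η : ℝ) :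
    ∑ ω, w ω * F (x - η • g ω) ≤
      F x - η * ⟪∑ ω, w ω • g ω, gradient F x⟫ + M / 2 * η ^ 2 * ∑ ω, w ω * ‖g ω‖ ^ 2 := by
  have hstep (ω : Ω) :
      F (x - η • g ω) ≤ F x - η * ⟪g ω, gradient F x⟫ + M / 2 * η ^ 2 * ‖g ω‖ ^ 2 := by
    have hdescent := le_quadratic_of_lipschitz_gradient hF hlip (-(η • g ω))
    rw [← sub_eq_add_neg, norm_neg, norm_smul, mul_pow, Real.norm_eq_abs, sq_abs, inner_neg_right,
      real_inner_smul_right, real_inner_comm] at hdescent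
    linarith
  calc ∑ ω, w ω * F (x - η • g ω)
      ≤ ∑ ω, w ω * (F x - η * ⟪g ω, gradient F x⟫ + M / 2 * η ^ 2 * ‖g ω‖ ^ 2) :=
        Finset.sum_le_sum fun ω _ => mul_le_mul_of_nonneg_left (hstep ω) (hw0 ω)
    _ = ∑ ω, (w ω * F x - η * (w ω * ⟪g ω, gradient F x⟫)
          + M / 2 * η ^ 2 * (w ω * ‖g ω‖ ^ 2)) :=
        Finset.sum_congr rfl fun ω _ => by ring
    _ = _ := by
        rw [Finset.sum_add_distrib, Finset.sum_sub_distrib, ← Finset.mul_sum, ← Finset.mul_sum,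
          ← Finset.sum_mul, sum_mul_inner, hw1, one_mul]

lemma neg_two_mul_inner_le {β : ℝ} (hβ : 0 < β) (g z : E) :
    -(2 * ⟪g, z⟫) ≤ ‖g‖ ^ 2 / β + β * ‖z‖ ^ 2 := by
  have hsq : ‖g + β • z‖ ^ 2 / β = ‖g‖ ^ 2 / β + 2 * ⟪g, z⟫ + β * ‖z‖ ^ 2 := by
    rw [norm_add_sq_real, real_inner_smul_right, norm_smul, mul_pow, Real.norm_eq_abs, sq_abs]
    field_simp
  have hnonneg : 0 ≤ ‖g + β • z‖ ^ 2 / β := by positivity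
  linarith

lemma sum_mul_lyapunov_step_le [CompleteSpace E] (hw0 : ∀ ω, 0 ≤ w ω) (hw1 : ∑ ω, w ω = 1)
    {F : E → ℝ} {M : ℝ} {x : E} (hF : Differentiable ℝ F)
    (hlip : ∀ y, ‖gradient F y - gradient F x‖ ≤ M * ‖y - x‖) {g : Ω → E}
    (hg : ∑ ω, w ω • g ω = gradient F x) (y : E) {η β c : ℝ} (hη : 0 ≤ η) (hβ : 0 < β)
    (hc : 0 ≤ c) :
    ∑ ω, w ω * (F (x - η • g ω) + c * ‖x - η • g ω - y‖ ^ 2) ≤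
      F x + c * (1 + η * β) * ‖x - y‖ ^ 2 - (η - c * η / β) * ‖gradient F x‖ ^ 2
        + η ^ 2 * (M / 2 + c) * ∑ ω, w ω * ‖g ω‖ ^ 2 := by
  have hvalue := sum_mul_comp_sub_smul_le hw0 hw1 hF hlip g η
  have hdist := sum_mul_norm_sub_smul_sub_sq hw1 g x y η
  have hyoung := mul_le_mul_of_nonneg_left (neg_two_mul_inner_le hβ (gradient F x) (x - y))
    (mul_nonneg hc hη)
  rw [hg, real_inner_self_eq_norm_sq] at hvalue
  rw [hg] at hdist
  calc ∑ ω, w ω * (F (x - η • g ω) + c * ‖x - η • g ω - y‖ ^ 2)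
      = ∑ ω, w ω * F (x - η • g ω) + c * ∑ ω, w ω * ‖x - η • g ω - y‖ ^ 2 := by
        simp only [mul_add, Finset.sum_add_distrib, Finset.mul_sum, mul_left_comm]
    _ ≤ (F x - η * ‖gradient F x‖ ^ 2 + M / 2 * η ^ 2 * ∑ ω, w ω * ‖g ω‖ ^ 2)
          + c * (‖x - y‖ ^ 2 + η ^ 2 * ∑ ω, w ω * ‖g ω‖ ^ 2)
          + c * η * (‖gradient F x‖ ^ 2 / β + β * ‖x - y‖ ^ 2) := by
        rw [hdist]
        linarith
    _ = _ := by ring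

end WeightedSum

lemma sum_mul_inner_nonneg_of_posSemidef {ι E : Type*} [Fintype ι] [NormedAddCommGroup E]
    [InnerProductSpace ℝ E] {A : Matrix ι ι ℝ} (hA : A.PosSemidef) (a : ι → E) :
    0 ≤ ∑ i, ∑ j, A i j * ⟪a i, a j⟫ := by
  simpa [dotProduct, Matrix.mulVec] using
    (hA.hadamard (Matrix.posSemidef_gram ℝ a)).dotProduct_mulVec_nonneg 1

section Sampling

variable {ι E : Type*} [Fintype ι] [DecidableEq ι] {w : Finset ι → ℝ} {v : ι → ℝ}

/-- The probability vector `p` of the sampling with law `w`: the probability that the random set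
contains `i`. -/
def inclusionProb (w : Finset ι → ℝ) (i : ι) : ℝ :=
  ∑ S with i ∈ S, w S

/-- The probability matrix `P` of the sampling with law `w`: the probability that the random set
contains both `i` and `j`. -/
def pairInclusionProb (w : Finset ι → ℝ) : Matrix ι ι ℝ :=
  Matrix.of fun i j => ∑ S with i ∈ S ∧ j ∈ S, w S

/-- The ESO condition `P - p pᵀ ⪯ Diag (p₁ v₁, …, pₙ vₙ)` for the sampling with law `w`. It is what
turns second moments of sums over the random set into separable bounds. -/
def IsESO (w : Finset ι → ℝ) (v : ι → ℝ) : Prop :=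
  (Matrix.diagonal (fun i => inclusionProb w i * v i) -
    (pairInclusionProb w -
      Matrix.of fun i j => inclusionProb w i * inclusionProb w j)).PosSemidef

/-- The Horvitz–Thompson estimator of the total `∑ i, y i` from the sampled values `y i`, `i ∈ S`:
each of them is weighted by the inverse of its inclusion probability. -/
noncomputable def horvitzThompson [AddCommMonoid E] [Module ℝ E] (w : Finset ι → ℝ) (y : ι → E)
    (S : Finset ι) : E :=
  ∑ i ∈ S, (inclusionProb w i)⁻¹ • y i

lemma sum_smul_sum_mem [AddCommMonoid E] [Module ℝ E] (w : Finset ι → ℝ) (a : ι → E) :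
    ∑ S, w S • ∑ i ∈ S, a i = ∑ i, inclusionProb w i • a i := by
  simp only [inclusionProb, Finset.smul_sum, Finset.sum_smul]
  exact Finset.sum_comm' fun S i => by simp

lemma sum_mul_sum_mem_mem (w : Finset ι → ℝ) (k : ι → ι → ℝ) :
    ∑ S, w S * ∑ i ∈ S, ∑ j ∈ S, k i j = ∑ i, ∑ j, pairInclusionProb w i j * k i j := by
  simp only [pairInclusionProb, Matrix.of_apply, ← Finset.sum_product', Finset.mul_sum,
    Finset.sum_mul]
  exact Finset.sum_comm' fun S ij => by simp

lemma inclusionProb_le_one (hw0 : ∀ S, 0 ≤ w S) (hw1 : ∑ S, w S = 1) (i : ι) :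
    inclusionProb w i ≤ 1 :=
  hw1 ▸ Finset.sum_le_sum_of_subset_of_nonneg (Finset.filter_subset _ _) fun S _ _ => hw0 S

lemma IsESO.nonneg (hESO : IsESO w v) (hw0 : ∀ S, 0 ≤ w S) (hw1 : ∑ S, w S = 1) {i : ι}
    (hp : 0 < inclusionProb w i) : 0 ≤ v i := by
  have hdiag : pairInclusionProb w i i = inclusionProb w i := by
    simp [pairInclusionProb, inclusionProb]
  have hentry : 0 ≤ inclusionProb w i * (v i - (1 - inclusionProb w i)) := by
    have := hESO.diag_nonneg (i := i)
    simp only [Matrix.sub_apply, Matrix.diagonal_apply_eq, Matrix.of_apply, hdiag] at this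
    linarith
  linarith [nonneg_of_mul_nonneg_right hentry hp, inclusionProb_le_one hw0 hw1 i]

variable [NormedAddCommGroup E] [InnerProductSpace ℝ E]

lemma IsESO.sum_mul_norm_sum_mem_sq_le (hESO : IsESO w v) (a : ι → E) :
    ∑ S, w S * ‖∑ i ∈ S, a i‖ ^ 2 ≤
      ‖∑ i, inclusionProb w i • a i‖ ^ 2 + ∑ i, inclusionProb w i * v i * ‖a i‖ ^ 2 := by
  have hsecond : ∑ S, w S * ‖∑ i ∈ S, a i‖ ^ 2 =
      ∑ i, ∑ j, pairInclusionProb w i j * ⟪a i, a j⟫ := by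
    simp_rw [← real_inner_self_eq_norm_sq, sum_inner, inner_sum, sum_mul_sum_mem_mem]
  have hmean : ‖∑ i, inclusionProb w i • a i‖ ^ 2 =
      ∑ i, ∑ j, inclusionProb w i * inclusionProb w j * ⟪a i, a j⟫ := by
    simp_rw [← real_inner_self_eq_norm_sq, sum_inner, inner_sum, real_inner_smul_left,
      real_inner_smul_right, mul_assoc]
  have hdiag : ∑ i, inclusionProb w i * v i * ‖a i‖ ^ 2 =
      ∑ i, ∑ j, Matrix.diagonal (fun i => inclusionProb w i * v i) i j * ⟪a i, a j⟫ := by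
    simp [Matrix.diagonal_apply]
  have hnonneg := sum_mul_inner_nonneg_of_posSemidef hESO a
  simp only [Matrix.sub_apply, Matrix.of_apply, sub_mul, Finset.sum_sub_distrib] at hnonneg
  rw [hsecond, hmean, hdiag]
  linarith

lemma sum_smul_horvitzThompson (hp : ∀ i, inclusionProb w i ≠ 0) (y : ι → E) :
    ∑ S, w S • horvitzThompson w y S = ∑ i, y i := by
  simp only [horvitzThompson, sum_smul_sum_mem, smul_inv_smul₀ (hp _)]

lemma IsESO.sum_mul_norm_horvitzThompson_add_sq_le (hESO : IsESO w v) (hw1 : ∑ S, w S = 1)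
    (hp : ∀ i, inclusionProb w i ≠ 0) (y : ι → E) (u : E) :
    ∑ S, w S * ‖horvitzThompson w y S + u‖ ^ 2 ≤
      ‖∑ i, y i + u‖ ^ 2 + ∑ i, v i / inclusionProb w i * ‖y i‖ ^ 2 := by
  have hsecond := hESO.sum_mul_norm_sum_mem_sq_le fun i => (inclusionProb w i)⁻¹ • y i
  have hweight (i : ι) : inclusionProb w i * v i * ‖(inclusionProb w i)⁻¹ • y i‖ ^ 2 =
      v i / inclusionProb w i * ‖y i‖ ^ 2 := by
    have := hp i
    rw [norm_smul, mul_pow, Real.norm_eq_abs, sq_abs]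
    field_simp
  simp only [smul_inv_smul₀ (hp _), hweight] at hsecond
  rw [sum_mul_norm_add_const_sq hw1, sum_smul_horvitzThompson hp, norm_add_sq_real]
  simp only [horvitzThompson]
  linarith

end Sampling

section SVRG

variable {ι E : Type*} [Fintype ι] [NormedAddCommGroup E] [InnerProductSpace ℝ E]
  [CompleteSpace E]

/-- The finite-sum objective: the average of the functions `f i`. -/
noncomputable def averageObjective (f : ι → E → ℝ) (y : E) : ℝ :=
  (Fintype.card ι : ℝ)⁻¹ * ∑ i, f i y

/-- The SVRG estimator of the gradient of `averageObjective f` at `x` for the minibatch `S`, with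
reference point `xt` (the paper's `x̃`), under the sampling with law `w`. -/
noncomputable def svrgGradient [DecidableEq ι] (f : ι → E → ℝ) (w : Finset ι → ℝ) (x xt : E)
    (S : Finset ι) : E :=
  ∑ i ∈ S, ((Fintype.card ι : ℝ) * inclusionProb w i)⁻¹ • (gradient (f i) x - gradient (f i) xt)
    + gradient (averageObjective f) xt

lemma hasGradientAt_averageObjective {f : ι → E → ℝ} {x : E}
    (hf : ∀ i, DifferentiableAt ℝ (f i) x) :
    HasGradientAt (averageObjective f)
      ((Fintype.card ι : ℝ)⁻¹ • ∑ i, gradient (f i) x) x := by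
  rw [hasGradientAt_iff_hasFDerivAt, map_smul, map_sum]
  exact (HasFDerivAt.fun_sum fun i _ => (hf i).hasGradientAt.hasFDerivAt).const_mul _

lemma gradient_averageObjective_sub {f : ι → E → ℝ} (hf : ∀ i, Differentiable ℝ (f i)) (x y : E) :
    gradient (averageObjective f) x - gradient (averageObjective f) y =
      ∑ i, (Fintype.card ι : ℝ)⁻¹ • (gradient (f i) x - gradient (f i) y) := by
  rw [(hasGradientAt_averageObjective fun i => hf i x).gradient,
    (hasGradientAt_averageObjective fun i => hf i y).gradient, ← smul_sub,
    ← Finset.sum_sub_distrib, Finset.smul_sum]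

lemma norm_gradient_averageObjective_sub_le {f : ι → E → ℝ} (hf : ∀ i, Differentiable ℝ (f i))
    {L : ι → ℝ} {x y : E}
    (hlip : ∀ i, ‖gradient (f i) x - gradient (f i) y‖ ≤ L i * ‖x - y‖) :
    ‖gradient (averageObjective f) x - gradient (averageObjective f) y‖ ≤
      (Fintype.card ι : ℝ)⁻¹ * (∑ i, L i) * ‖x - y‖ := by
  rw [gradient_averageObjective_sub hf, mul_assoc, Finset.sum_mul, Finset.mul_sum]
  refine norm_sum_le_of_le _ fun i _ => ?_
  rw [norm_smul, norm_inv, Real.norm_natCast]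
  gcongr
  exact hlip i

variable [DecidableEq ι] {f : ι → E → ℝ} {w : Finset ι → ℝ}

lemma svrgGradient_eq_horvitzThompson_add (f : ι → E → ℝ) (w : Finset ι → ℝ) (x xt : E)
    (S : Finset ι) :
    svrgGradient f w x xt S =
      horvitzThompson w
        (fun i => (Fintype.card ι : ℝ)⁻¹ • (gradient (f i) x - gradient (f i) xt)) S
      + gradient (averageObjective f) xt := by
  simp only [svrgGradient, horvitzThompson, mul_inv_rev, mul_smul]

lemma sum_smul_svrgGradient (hf : ∀ i, Differentiable ℝ (f i)) (hw1 : ∑ S, w S = 1)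
    (hp : ∀ i, inclusionProb w i ≠ 0) (x xt : E) :
    ∑ S, w S • svrgGradient f w x xt S = gradient (averageObjective f) x := by
  simp only [svrgGradient_eq_horvitzThompson_add, smul_add, Finset.sum_add_distrib]
  rw [sum_smul_horvitzThompson hp, ← gradient_averageObjective_sub hf, ← Finset.sum_smul, hw1,
    one_smul, sub_add_cancel]

lemma IsESO.sum_mul_norm_svrgGradient_sq_le {v L : ι → ℝ} (hESO : IsESO w v)
    (hw0 : ∀ S, 0 ≤ w S) (hw1 : ∑ S, w S = 1) (hp : ∀ i, 0 < inclusionProb w i)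
    (hf : ∀ i, Differentiable ℝ (f i)) {x xt : E}
    (hlip : ∀ i, ‖gradient (f i) x - gradient (f i) xt‖ ≤ L i * ‖x - xt‖) :
    ∑ S, w S * ‖svrgGradient f w x xt S‖ ^ 2 ≤
      ‖gradient (averageObjective f) x‖ ^ 2 +
        ((Fintype.card ι : ℝ) ^ 2)⁻¹ * (∑ i, v i * L i ^ 2 / inclusionProb w i)
          * ‖x - xt‖ ^ 2 := by
  simp only [svrgGradient_eq_horvitzThompson_add]
  refine (hESO.sum_mul_norm_horvitzThompson_add_sq_le hw1 (fun i => (hp i).ne') _ _).trans ?_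
  rw [← gradient_averageObjective_sub hf, sub_add_cancel, Finset.mul_sum, Finset.sum_mul]
  refine add_le_add_right (Finset.sum_le_sum fun i _ => ?_) _
  have hratio : 0 ≤ v i / inclusionProb w i := div_nonneg (hESO.nonneg hw0 hw1 (hp i)) (hp i).le
  calc v i / inclusionProb w i *
        ‖(Fintype.card ι : ℝ)⁻¹ • (gradient (f i) x - gradient (f i) xt)‖ ^ 2
      ≤ v i / inclusionProb w i * ((Fintype.card ι : ℝ)⁻¹ * (L i * ‖x - xt‖)) ^ 2 := by
        rw [norm_smul, norm_inv, Real.norm_natCast]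
        gcongr
        exact hlip i
    _ = _ := by ring

theorem svrg_one_step_lyapunov_bound_general (f : ι → E → ℝ) (L : ι → ℝ) (hL : ∀ i, 0 ≤ L i)
    (hdiff : ∀ i, Differentiable ℝ (f i))
    (hlip : ∀ i x y, ‖gradient (f i) x - gradient (f i) y‖ ≤ L i * ‖x - y‖)
    (Lbar : ℝ) (hLbar : Lbar = (Fintype.card ι : ℝ)⁻¹ * ∑ i, L i)
    (w : Finset ι → ℝ) (hw0 : ∀ S, 0 ≤ w S) (hw1 : ∑ S, w S = 1)
    (hproper : ∀ i, 0 < inclusionProb w i) (v : ι → ℝ) (hESO : IsESO w v)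
    (b K : ℝ) (hb : b = ∑ i, inclusionProb w i)
    (hK : K = b / (Fintype.card ι : ℝ) ^ 2 * ∑ i, v i * L i ^ 2 / inclusionProb w i)
    (x xt : E) (η β cplus : ℝ) (hη : 0 ≤ η) (hβ : 0 < β) (hcplus : 0 ≤ cplus)
    (c Γ : ℝ)
    (hc : c = cplus * (1 + η * β + 2 * K * η ^ 2 / b) + K * η ^ 2 * Lbar / b)
    (hΓ : Γ = η - cplus * η / β - η ^ 2 * Lbar - 2 * cplus * η ^ 2) :
    ∑ S, w S * (averageObjective f (x - η • svrgGradient f w x xt S) +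
        cplus * ‖x - η • svrgGradient f w x xt S - xt‖ ^ 2) ≤
      averageObjective f x + c * ‖x - xt‖ ^ 2 - Γ * ‖gradient (averageObjective f) x‖ ^ 2 := by
  -- `b = 0` only if there are no functions, and then both sides are the junk value `0`.
  have hKb : K / b =
      ((Fintype.card ι : ℝ) ^ 2)⁻¹ * ∑ i, v i * L i ^ 2 / inclusionProb w i := by
    rcases isEmpty_or_nonempty ι with hι | hι
    · simp [hK]
    · have : b ≠ 0 := hb ▸ (Finset.sum_pos (fun i _ => hproper i) Finset.univ_nonempty).ne'
      rw [hK]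
      field_simp
  have hLbar0 : 0 ≤ Lbar := hLbar ▸ mul_nonneg (by positivity) (Finset.sum_nonneg fun i _ => hL i)
  have hstep := sum_mul_lyapunov_step_le hw0 hw1
    (fun y => (hasGradientAt_averageObjective fun i => hdiff i y).differentiableAt)
    (fun y => hLbar ▸ norm_gradient_averageObjective_sub_le hdiff fun i => hlip i y x)
    (sum_smul_svrgGradient hdiff hw1 (fun i => (hproper i).ne') x xt) xt hη hβ hcplus
  have hsecond := hESO.sum_mul_norm_svrgGradient_sq_le hw0 hw1 hproper hdiff
    fun i => hlip i x xt
  rw [← hKb] at hsecond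
  have hsecond0 : 0 ≤ ∑ S, w S * ‖svrgGradient f w x xt S‖ ^ 2 :=
    Finset.sum_nonneg fun S _ => mul_nonneg (hw0 S) (sq_nonneg _)
  calc _ ≤ _ := hstep
    _ ≤ averageObjective f x + cplus * (1 + η * β) * ‖x - xt‖ ^ 2
          - (η - cplus * η / β) * ‖gradient (averageObjective f) x‖ ^ 2
          + η ^ 2 * (Lbar + 2 * cplus) *
            (‖gradient (averageObjective f) x‖ ^ 2 + K / b * ‖x - xt‖ ^ 2) := by
        gcongr <;> linarith
    _ = _ := by
        rw [hc, hΓ]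
        ring

end SVRG

/-- One-step Lyapunov inequality for minibatch SVRG with arbitrary sampling:
`E[f(x⁺) + c⁺‖x⁺ - x̃‖²] ≤ f(x) + c‖x - x̃‖² - Γ‖∇f(x)‖²`. -/
theorem svrg_one_step_lyapunov_bound {n d : ℕ}
    (f : Fin n → EuclideanSpace ℝ (Fin d) → ℝ)
    (L : Fin n → ℝ) (hL : ∀ i, 0 ≤ L i)
    (hdiff : ∀ i, Differentiable ℝ (f i))
    (hlip : ∀ i x y, ‖gradient (f i) x - gradient (f i) y‖ ≤ L i * ‖x - y‖)
    (F : EuclideanSpace ℝ (Fin d) → ℝ)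
    (hF : F = fun y => (n : ℝ)⁻¹ * ∑ i, f i y)
    (Lbar : ℝ) (hLbar : Lbar = (n : ℝ)⁻¹ * ∑ i, L i)
    (w : Finset (Fin n) → ℝ) (hw0 : ∀ S, 0 ≤ w S) (hw1 : ∑ S, w S = 1)
    (p : Fin n → ℝ)
    (hp : ∀ i, p i = ∑ S ∈ Finset.univ.filter (fun S : Finset (Fin n) => i ∈ S), w S)
    (hproper : ∀ i, 0 < p i)
    (P : Matrix (Fin n) (Fin n) ℝ)
    (hP : ∀ i j, P i j =
      ∑ S ∈ Finset.univ.filter (fun S : Finset (Fin n) => i ∈ S ∧ j ∈ S), w S)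
    (v : Fin n → ℝ)
    (hESO : (Matrix.diagonal (fun i => p i * v i) -
      (P - Matrix.of fun i j => p i * p j)).PosSemidef)
    (b K : ℝ) (hb : b = ∑ i, p i)
    (hK : K = b / (n : ℝ) ^ 2 * ∑ i, v i * L i ^ 2 / p i)
    (x xt : EuclideanSpace ℝ (Fin d))
    (η β cplus : ℝ) (hη : 0 < η) (hβ : 0 < β) (hcplus : 0 ≤ cplus)
    (c Γ : ℝ)
    (hc : c = cplus * (1 + η * β + 2 * K * η ^ 2 / b) + K * η ^ 2 * Lbar / b)
    (hΓ : Γ = η - cplus * η / β - η ^ 2 * Lbar - 2 * cplus * η ^ 2) :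
    ∑ S : Finset (Fin n), w S *
        (F (x - η • ((∑ i ∈ S, ((n : ℝ) * p i)⁻¹ •
              (gradient (f i) x - gradient (f i) xt)) + gradient F xt)) +
          cplus * ‖(x - η • ((∑ i ∈ S, ((n : ℝ) * p i)⁻¹ •
              (gradient (f i) x - gradient (f i) xt)) + gradient F xt)) - xt‖ ^ 2)
      ≤ F x + c * ‖x - xt‖ ^ 2 - Γ * ‖gradient F x‖ ^ 2 := by
  obtain rfl : p = inclusionProb w := funext hp
  obtain rfl : P = pairInclusionProb w := Matrix.ext hP
  obtain rfl : F = averageObjective f := by ext; simp only [hF, averageObjective, Fintype.card_fin]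
  simpa only [svrgGradient, Fintype.card_fin] using
    svrg_one_step_lyapunov_bound_general f L hL hdiff hlip Lbar (by rwa [Fintype.card_fin]) w hw0
      hw1 hproper v hESO b K hb (by rwa [Fintype.card_fin]) x xt η β cplus hη.le hβ hcplus c Γ hc hΓ
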